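/- Let a ≥ b ≥ k ≥ 1 with n ≥ a+b. For 1 ≤ i ≤ b set p = i − min(b−k, i), q = min(k, i), and for p ≤ t ≤ q set d_k(a,b,i,t) = 1 − Σ_{j=p}^{t} (−1)^j C(a−k+j, a−k) C(b−k−i+t, t−j). Then the cokernel of γ_k: Λ^a⊗Λ^k⊗Λ^{b−k} → Λ^a⊗Λ^b is isomorphic as a G-module to the Schur module L_{(a,b)} if and only if for every i with 1 ≤ i ≤ b there exists t with p ≤ t ≤ q and d_k(a,b,i,t) ≠ 0. -/

import Mathlib

open TensorProduct

set_option synthInstance.maxHeartbeats 1000000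
set_option maxSynthPendingDepth 3
set_option maxHeartbeats 1000000

noncomputable section

namespace MMS

variable (K : Type) [Field K] [CharZero K] (n : ℕ)

/-- `V = K^n`, the natural module of `G = GL(n,K)`. -/
abbrev V : Type := Fin n → K

/-- `Λ^p`, the `p`-th exterior power of `V`. -/
abbrev Lam (p : ℕ) : Type := ⋀[K]^p (V K n)

/-- The wedge `v_1 ∧ ⋯ ∧ v_p ∈ Λ^p`. -/
def wedge {p : ℕ} (v : Fin p → V K n) : Lam K n p :=
  ⟨ExteriorAlgebra.ιMulti K p v, ExteriorAlgebra.ιMulti_range K p (Set.mem_range_self v)⟩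

/-- Transport along an equality of degrees. -/
def ecast {p q : ℕ} (h : p = q) : Lam K n p ≃ₗ[K] Lam K n q :=
  h ▸ LinearEquiv.refl K (Lam K n p)

/-- `m` is the wedge multiplication map `Λ^p ⊗ Λ^q → Λ^{p+q}`. -/
def IsMulMap (p q : ℕ) (m : Lam K n p ⊗[K] Lam K n q →ₗ[K] Lam K n (p+q)) : Prop :=
  ∀ (v : Fin p → V K n) (w : Fin q → V K n),
    m (wedge K n v ⊗ₜ[K] wedge K n w) = wedge K n (Fin.append v w)

/-- The set of `(p,q)`-shuffles: permutations `σ` of `{1, …, p+q}` which are strictly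
increasing on the first `p` and on the last `q` indices. -/
def shuffles (p q : ℕ) : Finset (Equiv.Perm (Fin (p+q))) :=
  Finset.univ.filter (fun σ =>
    (∀ i j : Fin (p+q), i < j → (j : ℕ) < p → σ i < σ j) ∧
    (∀ i j : Fin (p+q), i < j → p ≤ (i : ℕ) → σ i < σ j))

/-- `D` is the component `Δ_{p,q} : Λ^{p+q} → Λ^p ⊗ Λ^q` of the comultiplication, i.e.
`Δ_{p,q}(v_1 ∧ ⋯ ∧ v_{p+q}) = Σ_σ sgn(σ) (v_{σ(1)} ∧ ⋯ ∧ v_{σ(p)}) ⊗ (v_{σ(p+1)} ∧ ⋯ ∧ v_{σ(p+q)})`,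
the sum being over all `(p,q)`-shuffles. -/
def IsComulMap (p q : ℕ) (D : Lam K n (p+q) →ₗ[K] Lam K n p ⊗[K] Lam K n q) : Prop :=
  ∀ v : Fin (p+q) → V K n,
    D (wedge K n v) =
      ∑ σ ∈ shuffles p q,
        (Equiv.Perm.sign σ : ℤ) •
          (wedge K n (fun i => v (σ (Fin.castAdd q i))) ⊗ₜ[K]
            wedge K n (fun i => v (σ (Fin.natAdd p i))))

variable (mf : ∀ p q : ℕ, Lam K n p ⊗[K] Lam K n q →ₗ[K] Lam K n (p+q))
variable (Df : ∀ p q : ℕ, Lam K n (p+q) →ₗ[K] Lam K n p ⊗[K] Lam K n q)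

/-- The map `δ_t = (m ⊗ 1) ∘ (1 ⊗ Δ_{t,b-t}) : Λ^a ⊗ Λ^b → Λ^{a+t} ⊗ Λ^{b-t}`. -/
def deltaMap (a b t : ℕ) (ht : t ≤ b) :
    Lam K n a ⊗[K] Lam K n b →ₗ[K] Lam K n (a+t) ⊗[K] Lam K n (b-t) :=
  (TensorProduct.map (mf a t) LinearMap.id)
    ∘ₗ (TensorProduct.assoc K (Lam K n a) (Lam K n t) (Lam K n (b-t))).symm.toLinearMap
    ∘ₗ (TensorProduct.map LinearMap.id
        ((Df t (b-t)) ∘ₗ (ecast K n (by omega : b = t + (b-t))).toLinearMap))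

/-- The map `θ_t = (1 ⊗ m) ∘ (Δ_{a-t,t} ⊗ 1) : Λ^a ⊗ Λ^b → Λ^{a-t} ⊗ Λ^{b+t}`. -/
def thetaMap (a b t : ℕ) (ht : t ≤ a) :
    Lam K n a ⊗[K] Lam K n b →ₗ[K] Lam K n (a-t) ⊗[K] Lam K n (b+t) :=
  (TensorProduct.map LinearMap.id
      ((ecast K n (by omega : t + b = b + t)).toLinearMap ∘ₗ mf t b))
    ∘ₗ (TensorProduct.assoc K (Lam K n (a-t)) (Lam K n t) (Lam K n b)).toLinearMap
    ∘ₗ (TensorProduct.map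
        ((Df (a-t) t) ∘ₗ (ecast K n (by omega : a = (a-t) + t)).toLinearMap) LinearMap.id)

/-- The map `Φ_t = θ_t ∘ δ_t : Λ^a ⊗ Λ^b → Λ^a ⊗ Λ^b`. -/
def PhiMap (a b t : ℕ) (hta : t ≤ a) (htb : t ≤ b) :
    Lam K n a ⊗[K] Lam K n b →ₗ[K] Lam K n a ⊗[K] Lam K n b :=
  (TensorProduct.congr (ecast K n (by omega : a + t - t = a))
      (ecast K n (by omega : b - t + t = b))).toLinearMap
    ∘ₗ thetaMap K n mf Df (a+t) (b-t) t (by omega)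
    ∘ₗ deltaMap K n mf Df a b t htb

/-- The map `Φ_t`, extended by `0` to all `t`. -/
def PhiMap' (a b t : ℕ) :
    Lam K n a ⊗[K] Lam K n b →ₗ[K] Lam K n a ⊗[K] Lam K n b :=
  if h : t ≤ a ∧ t ≤ b then PhiMap K n mf Df a b t h.1 h.2 else 0

/-- The map `θ_1 : Λ^{a+1} ⊗ Λ^{b-1} → Λ^a ⊗ Λ^b` (for `b ≥ 1`). -/
def theta1 (a b : ℕ) (hb : 1 ≤ b) :
    Lam K n (a+1) ⊗[K] Lam K n (b-1) →ₗ[K] Lam K n a ⊗[K] Lam K n b :=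
  (TensorProduct.congr (ecast K n (by omega : a + 1 - 1 = a))
      (ecast K n (by omega : b - 1 + 1 = b))).toLinearMap
    ∘ₗ thetaMap K n mf Df (a+1) (b-1) 1 (by omega)

/-- The submodule of relations defining the Schur module `L_{(a,b)}`: the image of
`θ_1` if `b ≥ 1`, and `0` if `b = 0`. -/
def schurRel (a b : ℕ) : Submodule K (Lam K n a ⊗[K] Lam K n b) :=
  if hb : 1 ≤ b then LinearMap.range (theta1 K n mf Df a b hb) else ⊥

/-- The Schur module `L_{(a,b)}`, realized as the cokernel of `θ_1` (in characteristic zero). -/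
abbrev SchurL (a b : ℕ) : Type :=
  (Lam K n a ⊗[K] Lam K n b) ⧸ schurRel K n mf Df a b

/-- The projection `π_{(a,b)} : Λ^a ⊗ Λ^b → L_{(a,b)}`. -/
def schurProj (a b : ℕ) : Lam K n a ⊗[K] Lam K n b →ₗ[K] SchurL K n mf Df a b :=
  (schurRel K n mf Df a b).mkQ

/-- The coefficient `c_t(a,b,i) = C(i,t)·C(a-b+t+i,t)`. -/
def cCoef (a b t i : ℕ) : ℕ := (i.choose t) * ((a-b+t+i).choose t)

/-- The group `G = GL(n,K)`. -/
abbrev GLn : Type := Matrix.GeneralLinearGroup (Fin n) K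

/-- `rho` is the family of natural actions of `G = GL(n,K)` on the exterior powers `Λ^p`
of the natural module `V = K^n`. -/
def IsExtAction (rho : ∀ p : ℕ, GLn K n → (Lam K n p →ₗ[K] Lam K n p)) : Prop :=
  ∀ (p : ℕ) (g : GLn K n) (v : Fin p → V K n),
    rho p g (wedge K n v) =
      wedge K n (fun i => Matrix.toLin' (g : Matrix (Fin n) (Fin n) K) (v i))

/-- The action of `g ∈ GL(n,K)` on `Λ^a ⊗ Λ^b`. -/
def rhoT (rho : ∀ p : ℕ, GLn K n → (Lam K n p →ₗ[K] Lam K n p)) (a b : ℕ) (g : GLn K n) :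
    Lam K n a ⊗[K] Lam K n b →ₗ[K] Lam K n a ⊗[K] Lam K n b :=
  TensorProduct.map (rho a g) (rho b g)

/-- The quotients `M₁ ⧸ N₁` and `M₂ ⧸ N₂` are isomorphic as representations, with respect
to the given actions `ρ₁, ρ₂` on `M₁` and `M₂` (which descend to the quotients). -/
def IsQuotIso {G' : Type} {M₁ M₂ : Type} [AddCommGroup M₁] [Module K M₁]
    [AddCommGroup M₂] [Module K M₂]
    (N₁ : Submodule K M₁) (N₂ : Submodule K M₂)
    (ρ₁ : G' → M₁ →ₗ[K] M₁) (ρ₂ : G' → M₂ →ₗ[K] M₂) : Prop :=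
  ∃ e : (M₁ ⧸ N₁) ≃ₗ[K] (M₂ ⧸ N₂),
    ∀ (g : G') (x : M₁) (y : M₂),
      e (Submodule.Quotient.mk x) = Submodule.Quotient.mk y →
      e (Submodule.Quotient.mk (ρ₁ g x)) = Submodule.Quotient.mk (ρ₂ g y)

/-- The "multiply in pairs" map
`(Λ^{p₁} ⊗ Λ^{q₁}) ⊗ (Λ^{p₂} ⊗ Λ^{q₂}) → Λ^{p₁+p₂} ⊗ Λ^{q₁+q₂}`. -/
def pairMul (p₁ q₁ p₂ q₂ : ℕ) :
    (Lam K n p₁ ⊗[K] Lam K n q₁) ⊗[K] (Lam K n p₂ ⊗[K] Lam K n q₂) →ₗ[K]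
      Lam K n (p₁+p₂) ⊗[K] Lam K n (q₁+q₂) :=
  (TensorProduct.map (mf p₁ p₂) (mf q₁ q₂))
    ∘ₗ (TensorProduct.tensorTensorTensorComm K (Lam K n p₁) (Lam K n q₁)
        (Lam K n p₂) (Lam K n q₂)).toLinearMap

/-- The map `φ_k = (m ⊗ m) ∘ (1 ⊗ τ ⊗ 1) ∘ (Δ_{a-k,k} ⊗ Δ_{k,b-k}) : Λ^a ⊗ Λ^b → Λ^a ⊗ Λ^b`. -/
def phiSmall (a b k : ℕ) (hka : k ≤ a) (hkb : k ≤ b) :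
    Lam K n a ⊗[K] Lam K n b →ₗ[K] Lam K n a ⊗[K] Lam K n b :=
  (TensorProduct.congr (ecast K n (by omega : (a-k) + k = a))
      (ecast K n (by omega : k + (b-k) = b))).toLinearMap
    ∘ₗ pairMul K n mf (a-k) k k (b-k)
    ∘ₗ (TensorProduct.map
        ((Df (a-k) k) ∘ₗ (ecast K n (by omega : a = (a-k) + k)).toLinearMap)
        ((Df k (b-k)) ∘ₗ (ecast K n (by omega : b = k + (b-k))).toLinearMap))

/-- The map `ψ_k = C(b,k)·1 - φ_k : Λ^a ⊗ Λ^b → Λ^a ⊗ Λ^b`. -/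
def psiSmall (a b k : ℕ) (hka : k ≤ a) (hkb : k ≤ b) :
    Lam K n a ⊗[K] Lam K n b →ₗ[K] Lam K n a ⊗[K] Lam K n b :=
  (Nat.choose b k : K) • LinearMap.id - phiSmall K n mf Df a b k hka hkb

/-- The map `β_k = (m ⊗ m) ∘ (1 ⊗ τ ⊗ 1) ∘ (Δ_{a-k,k} ⊗ 1 ⊗ 1) : Λ^a ⊗ (Λ^k ⊗ Λ^{b-k}) → Λ^a ⊗ Λ^b`. -/
def betaMap (a b k : ℕ) (hka : k ≤ a) (hkb : k ≤ b) :
    Lam K n a ⊗[K] (Lam K n k ⊗[K] Lam K n (b-k)) →ₗ[K] Lam K n a ⊗[K] Lam K n b :=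
  (TensorProduct.congr (ecast K n (by omega : (a-k) + k = a))
      (ecast K n (by omega : k + (b-k) = b))).toLinearMap
    ∘ₗ pairMul K n mf (a-k) k k (b-k)
    ∘ₗ (TensorProduct.map
        ((Df (a-k) k) ∘ₗ (ecast K n (by omega : a = (a-k) + k)).toLinearMap)
        LinearMap.id)

/-- The map `γ_k : Λ^a ⊗ (Λ^k ⊗ Λ^{b-k}) → Λ^a ⊗ Λ^b`,
`γ_k(x ⊗ y ⊗ z) = x ⊗ (y ∧ z) - β_k(x ⊗ y ⊗ z)`. -/
def gammaMap (a b k : ℕ) (hka : k ≤ a) (hkb : k ≤ b) :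
    Lam K n a ⊗[K] (Lam K n k ⊗[K] Lam K n (b-k)) →ₗ[K] Lam K n a ⊗[K] Lam K n b :=
  (TensorProduct.map LinearMap.id
      ((ecast K n (by omega : k + (b-k) = b)).toLinearMap ∘ₗ mf k (b-k)))
    - betaMap K n mf Df a b k hka hkb

/-- The quantity `d_k(a,b,t)` (for the given `i`), from Lemma 5.3 of the paper. -/
def dInt (a b k i t : ℕ) : ℤ :=
  1 - ∑ j ∈ Finset.Icc (i - min (b-k) i) t,
        (-1:ℤ)^j * ((a-k+j).choose (a-k) : ℤ) * ((b-k+t-i).choose (t-j) : ℤ)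

end MMS

namespace MMS

section ExteriorAlgebra

variable {K : Type} [Field K] {E W : Type} [AddCommGroup E] [Module K E]
  [AddCommGroup W] [Module K W]

theorem exteriorPower_induction {m : ℕ} {C : ExteriorAlgebra K E → Prop}
    (zero : C 0) (add : ∀ x y, C x → C y → C (x + y)) (smul : ∀ (c : K) x, C x → C (c • x))
    (multi : ∀ v : Fin m → E, C (ExteriorAlgebra.ιMulti K m v))
    {x : ExteriorAlgebra K E} (hx : x ∈ ⋀[K]^m E) : C x := by
  rw [← ExteriorAlgebra.ιMulti_span_fixedDegree] at hx
  induction hx using Submodule.span_induction with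
  | mem x h => obtain ⟨v, rfl⟩ := h; exact multi v
  | zero => exact zero
  | add x y _ _ hx hy => exact add x y hx hy
  | smul c x _ hx => exact smul c x hx

theorem one_mem_exteriorPower : (1 : ExteriorAlgebra K E) ∈ ⋀[K]^0 E :=
  Submodule.one_le.mp (by simp)

theorem mul_mem_exteriorPower {p q : ℕ} {x y : ExteriorAlgebra K E} (hx : x ∈ ⋀[K]^p E)
    (hy : y ∈ ⋀[K]^q E) : x * y ∈ ⋀[K]^(p + q) E := by
  have := Submodule.mul_mem_mul hx hy
  rwa [← pow_add] at this

theorem ι_mem_exteriorPower (v : E) : ExteriorAlgebra.ι K v ∈ ⋀[K]^1 E := by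
  rw [ExteriorAlgebra.exteriorPower, pow_one]; exact LinearMap.mem_range_self _ _

theorem ι_mul_of_mem (v : E) {p : ℕ} {x : ExteriorAlgebra K E} (hx : x ∈ ⋀[K]^p E) :
    ExteriorAlgebra.ι K v * x = (-1 : K) ^ p • (x * ExteriorAlgebra.ι K v) := by
  induction hx using Submodule.pow_induction_on_left' with
  | algebraMap r => simp [Algebra.commutes]
  | add x y i _ _ hx hy => rw [mul_add, add_mul, smul_add, hx, hy]
  | mem_mul w hw i x _ hx =>
    obtain ⟨w, rfl⟩ := hw
    have h := ExteriorAlgebra.ι_add_mul_swap (R := K) v w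
    rw [← mul_assoc, eq_neg_of_add_eq_zero_left h, neg_mul, mul_assoc, hx, mul_smul_comm,
      pow_succ, mul_assoc]
    simp

theorem mul_comm_of_mem {p q : ℕ} {x y : ExteriorAlgebra K E} (hx : x ∈ ⋀[K]^p E)
    (hy : y ∈ ⋀[K]^q E) : x * y = (-1 : K) ^ (p * q) • (y * x) := by
  induction hx using Submodule.pow_induction_on_left' with
  | algebraMap r => simp [Algebra.commutes]
  | add x z i _ _ hx hz => rw [mul_add, add_mul, smul_add, hx, hz]
  | mem_mul w hw i x _ hx =>
    obtain ⟨w, rfl⟩ := hw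
    rw [mul_assoc, hx, mul_smul_comm, ← mul_assoc, ι_mul_of_mem w hy, smul_mul_assoc, smul_smul,
      mul_assoc, ← pow_add]
    congr 2
    rw [Nat.succ_eq_add_one]
    ring

theorem map_mem_exteriorPower (f : E →ₗ[K] W) {p : ℕ} {x : ExteriorAlgebra K E}
    (hx : x ∈ ⋀[K]^p E) : ExteriorAlgebra.map f x ∈ ⋀[K]^p W := by
  refine exteriorPower_induction (C := fun x => ExteriorAlgebra.map f x ∈ ⋀[K]^p W) ?_ ?_ ?_ ?_ hx
  · simp
  · intro x y hx hy; rw [map_add]; exact add_mem hx hy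
  · intro c x hx; rw [map_smul]; exact Submodule.smul_mem _ _ hx
  · intro v
    rw [ExteriorAlgebra.map_apply_ιMulti]
    exact ExteriorAlgebra.ιMulti_range K p (Set.mem_range_self _)

theorem map_smul_of_mem (f : E →ₗ[K] W) (c : K) {p : ℕ} {x : ExteriorAlgebra K E}
    (hx : x ∈ ⋀[K]^p E) : ExteriorAlgebra.map (c • f) x = c ^ p • ExteriorAlgebra.map f x := by
  refine exteriorPower_induction
    (C := fun x => ExteriorAlgebra.map (c • f) x = c ^ p • ExteriorAlgebra.map f x) ?_ ?_ ?_ ?_ hx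
  · simp
  · intro x y hx hy; rw [map_add, map_add, smul_add, hx, hy]
  · intro c x hx; rw [map_smul, map_smul, hx, smul_comm]
  · intro v
    rw [ExteriorAlgebra.map_apply_ιMulti, ExteriorAlgebra.map_apply_ιMulti]
    have := (ExteriorAlgebra.ιMulti K p (M := W)).map_smul_univ (fun _ => c) (f ∘ v)
    simpa [Function.comp_def] using this

theorem map_map_apply {X : Type} [AddCommGroup X] [Module K X] (f : E →ₗ[K] W) (g : W →ₗ[K] X)
    (x : ExteriorAlgebra K E) :
    ExteriorAlgebra.map g (ExteriorAlgebra.map f x) = ExteriorAlgebra.map (g ∘ₗ f) x := by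
  rw [← ExteriorAlgebra.map_comp_map]; rfl

variable (K E) in
/-- The first inclusion `Λ(E) → Λ(E × E)`. -/
abbrev incl₁ : ExteriorAlgebra K E →ₐ[K] ExteriorAlgebra K (E × E) :=
  ExteriorAlgebra.map (LinearMap.inl K E E)

variable (K E) in
/-- The second inclusion `Λ(E) → Λ(E × E)`. -/
abbrev incl₂ : ExteriorAlgebra K E →ₐ[K] ExteriorAlgebra K (E × E) :=
  ExteriorAlgebra.map (LinearMap.inr K E E)

variable (K E) in
/-- The algebra map `Λ(E) → Λ(E × E)` induced by the diagonal of `E`. -/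
abbrev diag : ExteriorAlgebra K E →ₐ[K] ExteriorAlgebra K (E × E) :=
  ExteriorAlgebra.map (LinearMap.inl K E E + LinearMap.inr K E E)

theorem prod_induction {C : ExteriorAlgebra K (E × E) → Prop}
    (zero : C 0) (add : ∀ x y, C x → C y → C (x + y)) (smul : ∀ (c : K) x, C x → C (c • x))
    (mul : ∀ (p q : ℕ) (x : ⋀[K]^p E) (y : ⋀[K]^q E),
      C (incl₁ K E x * incl₂ K E y)) (r : ExteriorAlgebra K (E × E)) : C r := by
  have key : ∀ m : ℕ, ∀ v : Fin m → E × E, ExteriorAlgebra.ιMulti K m v ∈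
      Submodule.span K {r | ∃ (p q : ℕ) (x : ⋀[K]^p E) (y : ⋀[K]^q E),
        r = incl₁ K E x * incl₂ K E y} := by
    intro m
    induction m with
    | zero =>
      intro v
      refine Submodule.subset_span ⟨0, 0, ⟨1, one_mem_exteriorPower⟩,
        ⟨1, one_mem_exteriorPower⟩, ?_⟩
      simp
    | succ m ih =>
      intro v
      rw [ExteriorAlgebra.ιMulti_succ_apply]
      have := ih (Matrix.vecTail v)
      generalize ExteriorAlgebra.ιMulti K m (Matrix.vecTail v) = r at this ⊢
      induction this using Submodule.span_induction with
      | zero => simp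
      | add x y _ _ hx hy => rw [mul_add]; exact add_mem hx hy
      | smul c x _ hx => rw [mul_smul_comm]; exact Submodule.smul_mem _ _ hx
      | mem r h =>
        obtain ⟨p, q, x, y, rfl⟩ := h
        have hv : v 0 = LinearMap.inl K E E (v 0).1 + LinearMap.inr K E E (v 0).2 := by simp
        rw [hv, map_add, add_mul, ← mul_assoc, ← mul_assoc,
          ι_mul_of_mem (LinearMap.inr K E E (v 0).2) (map_mem_exteriorPower _ x.2), smul_mul_assoc]
        refine add_mem (Submodule.subset_span ?_)
          (Submodule.smul_mem _ _ (Submodule.subset_span ?_))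
        · refine ⟨1 + p, q, ⟨ExteriorAlgebra.ι K (v 0).1 * x, ?_⟩, y, ?_⟩
          · exact mul_mem_exteriorPower (ι_mem_exteriorPower _) x.2
          · simp
        · refine ⟨p, 1 + q, x, ⟨ExteriorAlgebra.ι K (v 0).2 * y, ?_⟩, ?_⟩
          · exact mul_mem_exteriorPower (ι_mem_exteriorPower _) y.2
          · simp [mul_assoc]
  have hr : r ∈ Submodule.span K {r | ∃ (p q : ℕ) (x : ⋀[K]^p E) (y : ⋀[K]^q E),
      r = incl₁ K E x * incl₂ K E y} := by
    have h : r ∈ Submodule.span K (Set.range fun x : Σ n, (Fin n → E × E) =>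
      ExteriorAlgebra.ιMulti K x.1 x.2) := by rw [ExteriorAlgebra.ιMulti_span]; trivial
    refine Submodule.span_le.mpr ?_ h
    rintro _ ⟨⟨m, v⟩, rfl⟩
    exact key m v
  induction hr using Submodule.span_induction with
  | mem r h => obtain ⟨p, q, x, y, rfl⟩ := h; exact mul p q x y
  | zero => exact zero
  | add x y _ _ hx hy => exact add x y hx hy
  | smul c x _ hx => exact smul c x hx

end ExteriorAlgebra

section Projection

variable {K : Type} [Field K] {E : Type} [AddCommGroup E] [Module K E]

variable (K E) in
/-- The projection of `Λ(E)` onto its component of degree `p`. -/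
def degProj (p : ℕ) : ExteriorAlgebra K E →ₗ[K] ⋀[K]^p E :=
  DirectSum.component K ℕ (fun i => ⋀[K]^i E) p ∘ₗ
    (DirectSum.decomposeLinearEquiv (fun i : ℕ => ⋀[K]^i E)).toLinearMap

theorem degProj_coe (p : ℕ) (x : ⋀[K]^p E) : degProj K E p x = x := by
  simp [degProj]

theorem degProj_coe_of_ne {p q : ℕ} (h : q ≠ p) (x : ⋀[K]^q E) : degProj K E p x = 0 := by
  simp [degProj, DirectSum.component.of, h]

variable (K E) in
/-- The algebra map from `Λ(E × E)` to the graded tensor square of `Λ(E)`. -/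
def toGradedTensor : ExteriorAlgebra K (E × E) →ₐ[K]
    (CliffordAlgebra.evenOdd (0 : QuadraticForm K E) ᵍ⊗[K]
      CliffordAlgebra.evenOdd (0 : QuadraticForm K E)) :=
  (CliffordAlgebra.ofProd (0 : QuadraticForm K E) (0 : QuadraticForm K E)).comp
    (CliffordAlgebra.map ⟨LinearMap.id, by intro m; simp⟩)

theorem toGradedTensor_ι (v w : E) :
    toGradedTensor K E (ExteriorAlgebra.ι K (v, w)) =
      GradedTensorProduct.includeLeft _ _ (ExteriorAlgebra.ι K v) +
      GradedTensorProduct.includeRight _ _ (ExteriorAlgebra.ι K w) := by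
  have h := CliffordAlgebra.map_apply_ι (Q₁ := (0 : QuadraticForm K (E × E)))
    (Q₂ := (0 : QuadraticForm K E).prod (0 : QuadraticForm K E))
    ⟨LinearMap.id, by intro m; simp⟩ (v, w)
  exact (congrArg _ h).trans (CliffordAlgebra.ofProd_ι_mk 0 0 v w)

theorem toGradedTensor_incl₁ (x : ExteriorAlgebra K E) :
    toGradedTensor K E (incl₁ K E x) = GradedTensorProduct.includeLeft _ _ x := by
  suffices h : (toGradedTensor K E).comp (incl₁ K E) =
      GradedTensorProduct.includeLeft (CliffordAlgebra.evenOdd (0 : QuadraticForm K E))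
        (CliffordAlgebra.evenOdd (0 : QuadraticForm K E)) from DFunLike.congr_fun h x
  refine ExteriorAlgebra.hom_ext (LinearMap.ext fun v => ?_)
  simp [toGradedTensor_ι]

theorem toGradedTensor_incl₂ (x : ExteriorAlgebra K E) :
    toGradedTensor K E (incl₂ K E x) = GradedTensorProduct.includeRight _ _ x := by
  suffices h : (toGradedTensor K E).comp (incl₂ K E) =
      GradedTensorProduct.includeRight (CliffordAlgebra.evenOdd (0 : QuadraticForm K E))
        (CliffordAlgebra.evenOdd (0 : QuadraticForm K E)) from DFunLike.congr_fun h x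
  refine ExteriorAlgebra.hom_ext (LinearMap.ext fun v => ?_)
  simp [toGradedTensor_ι]

variable (K E) in
/-- The projection `Λ(E × E) → Λ^a(E) ⊗ Λ^b(E)` onto the component of bidegree `(a,b)`. -/
def bidegProj (a b : ℕ) : ExteriorAlgebra K (E × E) →ₗ[K] (⋀[K]^a E) ⊗[K] (⋀[K]^b E) :=
  TensorProduct.map (degProj K E a) (degProj K E b) ∘ₗ
    (GradedTensorProduct.of K (CliffordAlgebra.evenOdd (0 : QuadraticForm K E))
      (CliffordAlgebra.evenOdd (0 : QuadraticForm K E))).symm.toLinearMap ∘ₗ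
    (toGradedTensor K E).toLinearMap

theorem bidegProj_incl (a b : ℕ) (x y : ExteriorAlgebra K E) :
    bidegProj K E a b (incl₁ K E x * incl₂ K E y) = degProj K E a x ⊗ₜ degProj K E b y := by
  simp only [bidegProj, LinearMap.comp_apply, AlgHom.toLinearMap_apply, map_mul,
    toGradedTensor_incl₁, toGradedTensor_incl₂]
  erw [GradedTensorProduct.tmul_one_mul_one_tmul]
  rfl

theorem bidegProj_coe {a b : ℕ} (x : ⋀[K]^a E) (y : ⋀[K]^b E) :
    bidegProj K E a b (incl₁ K E x * incl₂ K E y) = x ⊗ₜ y := by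
  rw [bidegProj_incl, degProj_coe, degProj_coe]

/-- Rescaling the two factors of `E × E`. -/
theorem bidegProj_scale (a b : ℕ) (s t : K) (r : ExteriorAlgebra K (E × E)) :
    bidegProj K E a b (ExteriorAlgebra.map (LinearMap.prodMap (s • LinearMap.id)
      (t • LinearMap.id)) r) = (s ^ a * t ^ b) • bidegProj K E a b r := by
  refine prod_induction (C := fun r => bidegProj K E a b (ExteriorAlgebra.map
    (LinearMap.prodMap (s • LinearMap.id) (t • LinearMap.id)) r) =
      (s ^ a * t ^ b) • bidegProj K E a b r) ?_ ?_ ?_ ?_ r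
  · simp
  · intro x y hx hy; rw [map_add, map_add, map_add, hx, hy, smul_add]
  · intro c x hx; rw [map_smul, map_smul, map_smul, hx, smul_comm]
  · intro p q x y
    have h₁ : LinearMap.prodMap (s • LinearMap.id) (t • LinearMap.id) ∘ₗ LinearMap.inl K E E =
      s • LinearMap.inl K E E := by ext <;> simp
    have h₂ : LinearMap.prodMap (s • LinearMap.id) (t • LinearMap.id) ∘ₗ LinearMap.inr K E E =
      t • LinearMap.inr K E E := by ext <;> simp
    rw [map_mul, map_map_apply, map_map_apply, h₁, h₂, map_smul_of_mem _ _ x.2,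
      map_smul_of_mem _ _ y.2, smul_mul_smul_comm, map_smul, bidegProj_incl]
    by_cases hp : p = a
    · by_cases hq : q = b
      · subst hp hq; rfl
      · rw [degProj_coe_of_ne hq]; simp
    · rw [degProj_coe_of_ne hp]; simp

end Projection

section Shuffles

/-- The set of the values of a permutation on the first `p` indices. -/
def firstValues (p q : ℕ) (σ : Equiv.Perm (Fin (p + q))) : Finset (Fin (p + q)) :=
  Finset.univ.image fun i : Fin p => σ (Fin.castAdd q i)

theorem mem_shuffles {p q : ℕ} {σ : Equiv.Perm (Fin (p + q))} :
    σ ∈ shuffles p q ↔ StrictMono (fun i => σ (Fin.castAdd q i)) ∧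
      StrictMono (fun i => σ (Fin.natAdd p i)) := by
  simp only [shuffles, Finset.mem_filter, Finset.mem_univ, true_and]
  constructor
  · rintro ⟨h₁, h₂⟩
    exact ⟨fun i j hij => h₁ _ _ (Fin.strictMono_castAdd q hij) (by simp),
      fun i j hij => h₂ _ _ (Fin.strictMono_natAdd p hij) (by simp)⟩
  · rintro ⟨h₁, h₂⟩
    constructor
    · intro i j hij hj
      exact @h₁ ⟨i, by have := Fin.lt_def.mp hij; omega⟩ ⟨j, hj⟩ hij
    · intro i j hij hi
      have hi' : i = Fin.natAdd p ⟨i - p, by omega⟩ := by ext; simp; omega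
      have hj' : j = Fin.natAdd p ⟨j - p, by omega⟩ := by ext; simp; omega
      rw [hi', hj']
      refine h₂ ?_
      rw [Fin.lt_def] at hij ⊢
      simp only
      omega

theorem castAdd_mem_firstValues {p q : ℕ} (σ : Equiv.Perm (Fin (p + q))) (i : Fin p) :
    σ (Fin.castAdd q i) ∈ firstValues p q σ :=
  Finset.mem_image_of_mem _ (Finset.mem_univ i)

theorem natAdd_notMem_firstValues {p q : ℕ} (σ : Equiv.Perm (Fin (p + q))) (i : Fin q) :
    σ (Fin.natAdd p i) ∉ firstValues p q σ := by
  simp only [firstValues, Finset.mem_image, Finset.mem_univ, true_and, not_exists]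
  intro j h
  have := congrArg Fin.val (σ.injective h)
  simp at this
  omega

theorem firstValues_injOn (p q : ℕ) :
    Set.InjOn (firstValues p q) (shuffles p q : Set (Equiv.Perm (Fin (p + q)))) := by
  intro σ hσ τ hτ h
  rw [Finset.mem_coe, mem_shuffles] at hσ hτ
  have hrange : ∀ ρ : Equiv.Perm (Fin (p + q)),
      Set.range (fun i => ρ (Fin.castAdd q i)) = firstValues p q ρ := by
    intro ρ; ext; simp [firstValues]
  have hrange' : ∀ ρ : Equiv.Perm (Fin (p + q)),
      Set.range (fun i => ρ (Fin.natAdd p i)) = (firstValues p q ρ : Set (Fin (p + q)))ᶜ := by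
    intro ρ
    ext x
    constructor
    · rintro ⟨i, rfl⟩; exact natAdd_notMem_firstValues ρ i
    · intro hx
      obtain ⟨y, rfl⟩ := ρ.surjective x
      induction y using Fin.addCases with
      | left i => exact absurd (castAdd_mem_firstValues ρ i) hx
      | right i => exact ⟨i, rfl⟩
  have h₁ := (hσ.1.range_inj hτ.1).mp (by rw [hrange, hrange, h])
  have h₂ := (hσ.2.range_inj hτ.2).mp (by rw [hrange', hrange', h])
  ext1 y
  induction y using Fin.addCases with
  | left i => exact congrFun h₁ i
  | right i => exact congrFun h₂ i

theorem exists_shuffle {p q : ℕ} (s : Finset (Fin (p + q))) (hs : s.card = p) :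
    ∃ σ ∈ shuffles p q, firstValues p q σ = s := by
  have hs' : sᶜ.card = q := by rw [Finset.card_compl, hs]; simp
  refine ⟨finSumFinEquiv.symm.trans (finSumEquivOfFinset hs hs'), ?_, ?_⟩
  · rw [mem_shuffles]
    constructor
    · simpa using (s.orderEmbOfFin hs).strictMono
    · simpa using (sᶜ.orderEmbOfFin hs').strictMono
  · refine Finset.eq_of_subset_of_card_le ?_ ?_
    · intro x
      simp only [firstValues, Finset.mem_image, Finset.mem_univ, true_and]
      rintro ⟨i, rfl⟩
      simp
    · rw [firstValues, Finset.card_image_of_injective _ ?_]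
      · simp [hs]
      · exact (Equiv.injective _).comp (Fin.castAdd_injective p q)

variable {K : Type} [Field K] {W : Type} [AddCommGroup W] [Module K W]

theorem sum_shuffles_ιMulti (p q : ℕ) (F G : Fin (p + q) → W) :
    ∑ σ ∈ shuffles p q, (Equiv.Perm.sign σ : ℤ) •
      (ExteriorAlgebra.ιMulti K p (fun i => F (σ (Fin.castAdd q i))) *
        ExteriorAlgebra.ιMulti K q (fun i => G (σ (Fin.natAdd p i)))) =
    ∑ s ∈ Finset.powersetCard p Finset.univ,
      ExteriorAlgebra.ιMulti K (p + q) (s.piecewise F G) := by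
  refine Finset.sum_nbij (firstValues p q) ?_ (firstValues_injOn p q) ?_ ?_
  · intro σ _
    rw [Finset.mem_powersetCard_univ, firstValues, Finset.card_image_of_injective]
    · simp
    · exact σ.injective.comp (Fin.castAdd_injective p q)
  · intro s hs
    obtain ⟨σ, h₁, h₂⟩ := exists_shuffle s (by simpa using hs)
    exact ⟨σ, h₁, h₂⟩
  · intro σ _
    have h : Fin.append (fun i => F (σ (Fin.castAdd q i))) (fun i => G (σ (Fin.natAdd p i))) =
        ((firstValues p q σ).piecewise F G) ∘ σ := by
      ext1 y
      induction y using Fin.addCases with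
      | left i => simp [Finset.piecewise_eq_of_mem, castAdd_mem_firstValues]
      | right i => simp [Finset.piecewise_eq_of_notMem, natAdd_notMem_firstValues]
    rw [ExteriorAlgebra.ιMulti_mul_ιMulti, h, AlternatingMap.map_perm, Units.smul_def, smul_smul]
    rw [← Units.val_mul, Int.units_mul_self, Units.val_one, one_smul]

end Shuffles

section Coproduct

variable {K : Type} [Field K] {n : ℕ} {W : Type} [AddCommGroup W] [Module K W]

theorem coe_ecast {p q : ℕ} (h : p = q) (x : Lam K n p) :
    (ecast K n h x : ExteriorAlgebra K (V K n)) = x := by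
  subst h; rfl

theorem lam_hom_ext {M : Type} [AddCommGroup M] [Module K M] {m : ℕ} {f g : Lam K n m →ₗ[K] M}
    (h : ∀ v, f (wedge K n v) = g (wedge K n v)) : f = g :=
  exteriorPower.linearMap_ext (AlternatingMap.ext h)

theorem coe_mf {p q : ℕ} {m : Lam K n p ⊗[K] Lam K n q →ₗ[K] Lam K n (p+q)}
    (hm : IsMulMap K n p q m) (x : Lam K n p) (y : Lam K n q) :
    (m (x ⊗ₜ y) : ExteriorAlgebra K (V K n)) = x * y := by
  have h : (TensorProduct.mk K _ _).compr₂ ((Submodule.subtype _) ∘ₗ m) =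
      (LinearMap.mul K (ExteriorAlgebra K (V K n))).compl₁₂ (Submodule.subtype _)
        (Submodule.subtype _) := by
    refine lam_hom_ext fun v => lam_hom_ext fun w => ?_
    simp only [LinearMap.compr₂_apply, TensorProduct.mk_apply, LinearMap.comp_apply, hm v w]
    exact (ExteriorAlgebra.ιMulti_mul_ιMulti _ _).symm
  exact DFunLike.congr_fun (DFunLike.congr_fun h x) y

/-- The map `x ⊗ y ↦ Λ(f)(x) ∧ Λ(g)(y)`. -/
def wedgeMap (f g : V K n →ₗ[K] W) (p q : ℕ) :
    Lam K n p ⊗[K] Lam K n q →ₗ[K] ExteriorAlgebra K W :=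
  TensorProduct.lift ((LinearMap.mul K (ExteriorAlgebra K W)).compl₁₂
    ((ExteriorAlgebra.map f).toLinearMap ∘ₗ Submodule.subtype _)
    ((ExteriorAlgebra.map g).toLinearMap ∘ₗ Submodule.subtype _))

@[simp]
theorem wedgeMap_tmul (f g : V K n →ₗ[K] W) {p q : ℕ} (x : Lam K n p) (y : Lam K n q) :
    wedgeMap f g p q (x ⊗ₜ y) = ExteriorAlgebra.map f x * ExteriorAlgebra.map g y := rfl

variable (Df : ∀ p q : ℕ, Lam K n (p+q) →ₗ[K] Lam K n p ⊗[K] Lam K n q)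

/-- The part of `Λ(f + g)` on `Λ^m` which is of degree `i` in `g`. -/
def split (f g : V K n →ₗ[K] W) (m i : ℕ) : Lam K n m →ₗ[K] ExteriorAlgebra K W :=
  if h : i ≤ m then
    wedgeMap f g (m - i) i ∘ₗ Df (m - i) i ∘ₗ (ecast K n (by omega : m = m - i + i)).toLinearMap
  else 0

theorem split_apply (f g : V K n →ₗ[K] W) {m p q : ℕ} (h : m = p + q) (x : Lam K n m) :
    split Df f g m q x = wedgeMap f g p q (Df p q (ecast K n h x)) := by
  obtain rfl : p = m - q := by omega
  rw [split, dif_pos (by omega)]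
  rfl

theorem split_smul (f g : V K n →ₗ[K] W) (c : K) (m i : ℕ) (x : Lam K n m) :
    split Df f (c • g) m i x = c ^ i • split Df f g m i x := by
  by_cases h : i ≤ m
  · rw [split_apply Df f _ (by omega : m = (m - i) + i),
      split_apply Df f _ (by omega : m = (m - i) + i)]
    generalize Df _ _ _ = t
    induction t with
    | zero => simp
    | add x y hx hy => rw [map_add, map_add, hx, hy, smul_add]
    | tmul x y => rw [wedgeMap_tmul, wedgeMap_tmul, map_smul_of_mem _ _ y.2, mul_smul_comm]
  · rw [split, split, dif_neg h, dif_neg h]; simp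

variable {Df} (hDf : ∀ p q, IsComulMap K n p q (Df p q))
include hDf

theorem split_wedge (f g : V K n →ₗ[K] W) {m i : ℕ} (h : i ≤ m) (v : Fin m → V K n) :
    split Df f g m i (wedge K n v) = ∑ s ∈ Finset.powersetCard (m - i) Finset.univ,
      ExteriorAlgebra.ιMulti K m (s.piecewise (f ∘ v) (g ∘ v)) := by
  obtain ⟨p, rfl⟩ := Nat.exists_eq_add_of_le' h
  rw [split_apply Df f g rfl]
  change wedgeMap f g p i (Df p i (wedge K n v)) = _
  rw [hDf, Nat.add_sub_cancel, ← sum_shuffles_ιMulti, map_sum]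
  refine Finset.sum_congr rfl fun σ _ => ?_
  rw [map_zsmul, wedgeMap_tmul]
  simp only [wedge]
  rw [ExteriorAlgebra.map_apply_ιMulti, ExteriorAlgebra.map_apply_ιMulti]
  rfl

/-- The exterior algebra map of a sum, in terms of the comultiplication. -/
theorem map_add_eq_sum_split (f g : V K n →ₗ[K] W) {m : ℕ} (x : Lam K n m) :
    ExteriorAlgebra.map (f + g) x = ∑ i ∈ Finset.range (m + 1), split Df f g m i x := by
  suffices h : (ExteriorAlgebra.map (f + g)).toLinearMap ∘ₗ Submodule.subtype _ =
      ∑ i ∈ Finset.range (m + 1), split Df f g m i by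
    have := DFunLike.congr_fun h x
    simpa using this
  refine lam_hom_ext fun v => ?_
  rw [LinearMap.sum_apply]
  change ExteriorAlgebra.map (f + g) (ExteriorAlgebra.ιMulti K m v) = _
  rw [ExteriorAlgebra.map_apply_ιMulti]
  change ExteriorAlgebra.ιMulti K m (f ∘ v + g ∘ v) = _
  rw [AlternatingMap.map_add_univ, ← Finset.powerset_univ, Finset.sum_powerset,
    Finset.card_univ, Fintype.card_fin, ← Finset.sum_range_reflect]
  refine Finset.sum_congr rfl fun i hi => ?_
  rw [Finset.mem_range] at hi
  rw [split_wedge hDf f g (by omega)]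
  rfl

end Coproduct

section Coefficients

variable {K : Type} [Field K] [CharZero K]

/-- Comparison of coefficients in a vector-valued polynomial identity. -/
theorem eq_choose_smul_of_forall {M : Type} [AddCommGroup M] [Module K M] (Z : ℕ → M) (Y : M)
    (N e m : ℕ) (h : ∀ c : K, (1 + c) ^ N • ∑ i ∈ Finset.range m, c ^ i • Z i =
      (1 + c) ^ (N + e) • Y) {i : ℕ} (hi : i < m) : Z i = (e.choose i : K) • Y := by
  rw [← sub_eq_zero, ← Module.forall_dual_apply_eq_zero_iff K]
  intro φ
  have hp : (1 + Polynomial.X) ^ N *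
        ∑ j ∈ Finset.range m, Polynomial.C (φ (Z j)) * Polynomial.X ^ j =
      (1 + Polynomial.X) ^ N * ((1 + Polynomial.X) ^ e * Polynomial.C (φ Y)) := by
    refine Polynomial.funext fun c => ?_
    have := congrArg φ (h c)
    simp only [map_smul, map_sum, smul_eq_mul] at this
    simp only [Polynomial.eval_mul, Polynomial.eval_pow, Polynomial.eval_add,
      Polynomial.eval_one, Polynomial.eval_X, Polynomial.eval_C, Polynomial.eval_finsetSum]
    rw [← mul_assoc, ← pow_add, ← this]
    exact congrArg _ (Finset.sum_congr rfl fun j _ => mul_comm _ _)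
  have hne : (1 + Polynomial.X : Polynomial K) ^ N ≠ 0 := by
    refine pow_ne_zero _ fun h0 => ?_
    have := congrArg (Polynomial.eval 0) h0
    simp at this
  have hc := congrArg (fun P => Polynomial.coeff P i) (mul_left_cancel₀ hne hp)
  simp only [Polynomial.finsetSum_coeff, Polynomial.coeff_C_mul_X_pow,
    Polynomial.coeff_mul_C, Polynomial.coeff_one_add_X_pow] at hc
  rw [Finset.sum_ite_eq, if_pos (Finset.mem_range.mpr hi)] at hc
  rw [map_sub, map_smul, hc, smul_eq_mul, sub_self]

end Coefficients

section Split

variable {K : Type} [Field K] {n : ℕ} {W : Type} [AddCommGroup W] [Module K W]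
variable {Df : ∀ p q : ℕ, Lam K n (p+q) →ₗ[K] Lam K n p ⊗[K] Lam K n q}
  (hDf : ∀ p q, IsComulMap K n p q (Df p q))
include hDf

theorem map_add_smul_eq_sum_split (f g : V K n →ₗ[K] W) (c : K) {m : ℕ} (x : Lam K n m) :
    ExteriorAlgebra.map (f + c • g) x =
      ∑ i ∈ Finset.range (m + 1), c ^ i • split Df f g m i x := by
  rw [map_add_eq_sum_split hDf]
  exact Finset.sum_congr rfl fun i _ => split_smul Df f g c m i x

theorem split_zero (f g : V K n →ₗ[K] W) {m : ℕ} (x : Lam K n m) :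
    split Df f g m 0 x = ExteriorAlgebra.map f x := by
  have h := map_add_smul_eq_sum_split hDf f g 0 x
  rw [zero_smul, add_zero, Finset.sum_range_succ'] at h
  simpa using h.symm

end Split

section Bidegree

variable {K : Type} [Field K] {n : ℕ} {E : Type} [AddCommGroup E] [Module K E]

theorem bidegProj_scaled_mul (a b l q : ℕ) (s t : K) (u : ExteriorAlgebra K E)
    {x y : ExteriorAlgebra K E} (hx : x ∈ ⋀[K]^l E) (hy : y ∈ ⋀[K]^q E) :
    (s ^ l * t ^ q) • bidegProj K E a b (ExteriorAlgebra.map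
        (s • LinearMap.inl K E E + t • LinearMap.inr K E E) u *
        incl₁ K E x * incl₂ K E y) =
      (s ^ a * t ^ b) • bidegProj K E a b
        (diag K E u * incl₁ K E x * incl₂ K E y) := by
  have h₁ : LinearMap.prodMap (s • LinearMap.id) (t • LinearMap.id) ∘ₗ
      LinearMap.inl K E E = s • LinearMap.inl K E E := by ext <;> simp
  have h₂ : LinearMap.prodMap (s • LinearMap.id) (t • LinearMap.id) ∘ₗ
      LinearMap.inr K E E = t • LinearMap.inr K E E := by ext <;> simp
  rw [← bidegProj_scale, map_mul (ExteriorAlgebra.map _), map_mul (ExteriorAlgebra.map _),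
    map_map_apply, map_map_apply, map_map_apply,
    LinearMap.comp_add, h₁, h₂, map_smul_of_mem _ _ hx, map_smul_of_mem _ _ hy, mul_smul_comm,
    mul_smul_comm, smul_mul_assoc, map_smul, map_smul, smul_smul, mul_comm (s ^ l)]

theorem bidegProj_incl_of_ne {a b p q : ℕ} {x y : ExteriorAlgebra K E}
    (hx : x ∈ ⋀[K]^p E) (hy : y ∈ ⋀[K]^q E) (h : p ≠ a ∨ q ≠ b) :
    bidegProj K E a b (incl₁ K E x * incl₂ K E y) = 0 := by
  rw [bidegProj_incl]
  rcases h with h | h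
  · rw [degProj_coe_of_ne h ⟨x, hx⟩, zero_tmul]
  · rw [degProj_coe_of_ne h ⟨y, hy⟩, tmul_zero]

theorem wedgeMap_mul_incl {p i l : ℕ} (x : Lam K n p) (x' : Lam K n i)
    {y : ExteriorAlgebra K (V K n)} (hy : y ∈ ⋀[K]^l (V K n)) (w : ExteriorAlgebra K (V K n)) :
    wedgeMap (LinearMap.inl K (V K n) (V K n)) (LinearMap.inr K (V K n) (V K n)) p i (x ⊗ₜ x') *
        incl₁ K (V K n) y * incl₂ K (V K n) w =
      (-1 : K) ^ (i * l) • (incl₁ K (V K n) (x * y) * incl₂ K (V K n) (x' * w)) := by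
  rw [wedgeMap_tmul, mul_assoc (ExteriorAlgebra.map _ _),
    mul_comm_of_mem (map_mem_exteriorPower _ x'.2) (map_mem_exteriorPower _ hy), map_mul, map_mul]
  simp only [mul_smul_comm, smul_mul_assoc, mul_assoc]

variable {Df : ∀ p q : ℕ, Lam K n (p+q) →ₗ[K] Lam K n p ⊗[K] Lam K n q}
  (hDf : ∀ p q, IsComulMap K n p q (Df p q))
include hDf

/-- Only one component of the comultiplication contributes to a given bidegree. -/
theorem bidegProj_diag_mul {a b p i l : ℕ} (hpl : p + l = a) (u : Lam K n (p + i))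
    {y : ExteriorAlgebra K (V K n)} (hy : y ∈ ⋀[K]^l (V K n)) (w : ExteriorAlgebra K (V K n)) :
    bidegProj K (V K n) a b (diag K (V K n) u * incl₁ K (V K n) y * incl₂ K (V K n) w) =
      bidegProj K (V K n) a b (wedgeMap (LinearMap.inl K (V K n) (V K n))
        (LinearMap.inr K (V K n) (V K n)) p i (Df p i u) *
          incl₁ K (V K n) y * incl₂ K (V K n) w) := by
  rw [diag, map_add_eq_sum_split hDf, Finset.sum_mul, Finset.sum_mul, map_sum,
    Finset.sum_eq_single i]
  · rw [split_apply Df _ _ rfl]; rfl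
  · intro j hj hji
    rw [Finset.mem_range] at hj
    rw [split_apply Df _ _ (by omega : p + i = (p + i - j) + j)]
    generalize Df _ _ _ = t
    induction t with
    | zero => simp
    | add x y hx hy => rw [map_add, add_mul, add_mul, map_add, hx, hy, add_zero]
    | tmul x x' =>
      rw [wedgeMap_mul_incl _ _ hy, map_smul, bidegProj_incl,
        degProj_coe_of_ne (by omega : p + i - j + l ≠ a) ⟨_, mul_mem_exteriorPower x.2 hy⟩,
        zero_tmul, smul_zero]
  · intro h; exact absurd (Finset.mem_range.mpr (by omega)) h

end Bidegree

section Filtration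

variable {K : Type} [Field K] {n : ℕ}

variable (K n) in
/-- The span of the images in `Λ^a ⊗ Λ^b` of the products `Δ(u) ∧ (1 ⊗ w)` with `u ∈ Λ^{a+i}` and
`w ∈ Λ^{b-i}`. -/
def relSpan (a b i : ℕ) : Submodule K (Lam K n a ⊗[K] Lam K n b) :=
  Submodule.span K {z | ∃ u ∈ ⋀[K]^(a + i) (V K n), ∃ q, i + q = b ∧ ∃ w ∈ ⋀[K]^q (V K n),
    z = bidegProj K (V K n) a b (diag K _ u * incl₂ K _ w)}

theorem bidegProj_mem_relSpan {a b i q : ℕ} (h : i + q = b) {u w : ExteriorAlgebra K (V K n)}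
    (hu : u ∈ ⋀[K]^(a + i) (V K n)) (hw : w ∈ ⋀[K]^q (V K n)) :
    bidegProj K (V K n) a b (diag K _ u * incl₂ K _ w) ∈ relSpan K n a b i :=
  Submodule.subset_span ⟨u, hu, q, h, w, hw, rfl⟩

variable [CharZero K]
variable {Df : ∀ p q : ℕ, Lam K n (p+q) →ₗ[K] Lam K n p ⊗[K] Lam K n q}
  (hDf : ∀ p q, IsComulMap K n p q (Df p q))
include hDf

theorem relSpan_succ_le (a b i : ℕ) : relSpan K n a b (i + 1) ≤ relSpan K n a b i := by
  refine Submodule.span_le.mpr ?_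
  rintro _ ⟨u, hu, q, hq, w, hw, rfl⟩
  have key := eq_choose_smul_of_forall (K := K)
    (fun j => bidegProj K (V K n) a b (split Df (LinearMap.inl K (V K n) (V K n) +
      LinearMap.inr K (V K n) (V K n)) (LinearMap.inr K (V K n) (V K n)) (a + (i + 1)) j ⟨u, hu⟩ *
        incl₂ K _ w))
    (bidegProj K (V K n) a b (diag K _ u * incl₂ K _ w)) q (i + 1) (a + (i + 1) + 1)
    (fun c => by
      have h := bidegProj_scaled_mul a b 0 q 1 (1 + c) u one_mem_exteriorPower hw
      simp only [map_one, mul_one, one_pow, one_mul] at h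
      rw [add_comm q, hq, ← h, one_smul, add_smul, one_smul,
        ← add_assoc (LinearMap.inl K (V K n) (V K n)),
        map_add_smul_eq_sum_split hDf _ _ c (⟨u, hu⟩ : Lam K n (a + (i + 1))), Finset.sum_mul,
        map_sum]
      simp only [smul_mul_assoc, map_smul])
    (i := 1) (by omega)
  rw [Nat.choose_one_right] at key
  have hne : ((i + 1 : ℕ) : K) ≠ 0 := by exact_mod_cast Nat.succ_ne_zero i
  rw [SetLike.mem_coe, ← Submodule.smul_mem_iff _ hne, ← key,
    split_apply Df _ _ (by omega : a + (i + 1) = a + i + 1)]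
  generalize Df _ _ _ = t
  induction t with
  | zero => simp
  | add x y hx hy => rw [map_add, add_mul, map_add]; exact add_mem hx hy
  | tmul x y =>
    rw [wedgeMap_tmul, mul_assoc, ← map_mul]
    exact bidegProj_mem_relSpan (by omega) x.2 (mul_mem_exteriorPower y.2 hw)

/-- Moving a factor from the left to the right changes the sign only, modulo the next step of the
filtration. -/
theorem bidegProj_sub_mem_relSpan {a b i l q : ℕ} (h : i + l + q = b)
    {u w₁ w₂ : ExteriorAlgebra K (V K n)} (hu : u ∈ ⋀[K]^(a + i) (V K n))
    (hw₁ : w₁ ∈ ⋀[K]^l (V K n)) (hw₂ : w₂ ∈ ⋀[K]^q (V K n)) :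
    bidegProj K (V K n) a b (diag K _ u * incl₁ K _ w₁ * incl₂ K _ w₂) -
      (-1 : K) ^ l • bidegProj K (V K n) a b (diag K _ u * incl₂ K _ w₁ * incl₂ K _ w₂) ∈
        relSpan K n a b (i + 1) := by
  induction hw₁ using Submodule.pow_induction_on_left' generalizing i q u w₂ with
  | algebraMap r => simp
  | add x y l _ _ hx hy =>
    convert add_mem (hx h hu hw₂) (hy h hu hw₂) using 1
    simp only [map_add, mul_add, add_mul, smul_add]
    abel
  | mem_mul v hv l x hx ih =>
    obtain ⟨v, rfl⟩ := hv
    have huv : u * ExteriorAlgebra.ι K v ∈ ⋀[K]^(a + i + 1) (V K n) :=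
      mul_mem_exteriorPower hu (ι_mem_exteriorPower v)
    have hvw : ExteriorAlgebra.ι K v * w₂ ∈ ⋀[K]^(1 + q) (V K n) :=
      mul_mem_exteriorPower (ι_mem_exteriorPower v) hw₂
    have h₁ := relSpan_succ_le hDf a b (i + 1) (ih (by omega) huv hw₂)
    have h₂ := bidegProj_mem_relSpan (by omega : i + 1 + (l + q) = b) huv
      (mul_mem_exteriorPower hx hw₂)
    have h₃ := ih (by omega) hu hvw
    have e₁ : diag K (V K n) u * incl₁ K _ (ExteriorAlgebra.ι K v * x) * incl₂ K _ w₂ =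
        diag K (V K n) (u * ExteriorAlgebra.ι K v) * incl₁ K _ x * incl₂ K _ w₂ -
          (-1 : K) ^ l • (diag K (V K n) u * incl₁ K _ x *
            incl₂ K _ (ExteriorAlgebra.ι K v * w₂)) := by
      have hs : incl₂ K (V K n) (ExteriorAlgebra.ι K v) * incl₁ K (V K n) x = (-1 : K) ^ l •
          (incl₁ K (V K n) x * incl₂ K (V K n) (ExteriorAlgebra.ι K v)) := by
        rw [incl₂, ExteriorAlgebra.map_apply_ι]
        exact ι_mul_of_mem _ (map_mem_exteriorPower _ hx)
      have hd : diag K (V K n) (ExteriorAlgebra.ι K v) = incl₁ K (V K n) (ExteriorAlgebra.ι K v) +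
          incl₂ K (V K n) (ExteriorAlgebra.ι K v) := by
        simp only [ExteriorAlgebra.map_apply_ι, LinearMap.add_apply, map_add]
      have := congrArg (fun z => diag K (V K n) u * z * incl₂ K (V K n) w₂) hs
      simp only [mul_smul_comm, smul_mul_assoc] at this
      simp only [map_mul, hd, mul_add, add_mul, mul_assoc] at this ⊢
      rw [← this]
      abel
    have e₂ : diag K (V K n) u * incl₂ K _ x * incl₂ K _ (ExteriorAlgebra.ι K v * w₂) =
        (-1 : K) ^ l • (diag K (V K n) u * incl₂ K _ (ExteriorAlgebra.ι K v * x) *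
          incl₂ K _ w₂) := by
      have := ι_mul_of_mem v hx
      rw [this, map_smul, mul_smul_comm, smul_mul_assoc, smul_smul, ← mul_pow]
      simp [mul_assoc]
    rw [e₂] at h₃
    rw [e₁]
    convert sub_mem (add_mem h₁ (Submodule.smul_mem _ ((-1 : K) ^ l) h₂))
      (Submodule.smul_mem _ ((-1 : K) ^ l) h₃) using 1
    simp only [map_mul, map_smul, map_sub, smul_sub, smul_smul, mul_assoc, Nat.succ_eq_add_one,
      pow_succ, mul_neg, mul_one, neg_smul, ← mul_pow]
    abel_nf

end Filtration

section Formulas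

variable {K : Type} [Field K] {n : ℕ}
variable {mf : ∀ p q : ℕ, Lam K n p ⊗[K] Lam K n q →ₗ[K] Lam K n (p+q)}
  {Df : ∀ p q : ℕ, Lam K n (p+q) →ₗ[K] Lam K n p ⊗[K] Lam K n q}
  (hmf : ∀ p q, IsMulMap K n p q (mf p q)) (hDf : ∀ p q, IsComulMap K n p q (Df p q))

theorem bidegProj_eq_tmul {a b : ℕ} (x : Lam K n a) (y : Lam K n b)
    {x' y' : ExteriorAlgebra K (V K n)} (hx : (x : ExteriorAlgebra K (V K n)) = x')
    (hy : (y : ExteriorAlgebra K (V K n)) = y') :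
    bidegProj K (V K n) a b (incl₁ K _ x' * incl₂ K _ y') = x ⊗ₜ y := by
  subst hx hy
  exact bidegProj_coe x y

include hmf hDf

theorem theta1_tmul {a b : ℕ} (hb : 1 ≤ b) (u : Lam K n (a + 1)) (w : Lam K n (b - 1)) :
    theta1 K n mf Df a b hb (u ⊗ₜ w) =
      bidegProj K (V K n) a b (diag K _ u * incl₂ K _ w) := by
  have h := bidegProj_diag_mul hDf (b := b) (by omega : a + 1 - 1 + 0 = a)
    (ecast K n (by omega : a + 1 = a + 1 - 1 + 1) u) one_mem_exteriorPower w
  rw [coe_ecast, map_one, mul_one, mul_one] at h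
  rw [h]
  simp only [theta1, thetaMap, LinearMap.comp_apply, LinearEquiv.coe_coe, map_tmul,
    LinearMap.id_apply]
  generalize Df _ _ _ = t
  induction t with
  | zero => simp
  | add x y hx hy => rw [add_tmul]; simp only [map_add, add_mul, hx, hy]
  | tmul x y =>
    simp only [assoc_tmul, map_tmul, LinearMap.id_apply, LinearMap.comp_apply, LinearEquiv.coe_coe,
      congr_tmul, wedgeMap_tmul, mul_assoc]
    rw [← map_mul]
    exact (bidegProj_eq_tmul _ _ (coe_ecast _ _)
      (by rw [coe_ecast, coe_ecast, coe_mf (hmf _ _)])).symm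

theorem gammaMap_tmul {a b k : ℕ} (hka : k ≤ a) (hkb : k ≤ b) (x : Lam K n a) (y : Lam K n k)
    (z : Lam K n (b - k)) :
    gammaMap K n mf Df a b k hka hkb (x ⊗ₜ (y ⊗ₜ z)) =
      bidegProj K (V K n) a b (incl₁ K _ x * incl₂ K _ y * incl₂ K _ z) -
        (-1 : K) ^ k • bidegProj K (V K n) a b (diag K _ x * incl₁ K _ y * incl₂ K _ z) := by
  have h := bidegProj_diag_mul hDf (b := b) (by omega : a - k + k = a)
    (ecast K n (by omega : a = a - k + k) x) y.2 z
  rw [coe_ecast] at h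
  rw [h]
  simp only [gammaMap, betaMap, LinearMap.sub_apply, LinearMap.comp_apply, LinearEquiv.coe_coe,
    map_tmul, LinearMap.id_apply]
  congr 1
  · rw [mul_assoc, ← map_mul]
    exact (bidegProj_eq_tmul _ _ rfl (by rw [coe_ecast, coe_mf (hmf _ _)])).symm
  · generalize Df _ _ _ = t
    induction t with
    | zero => simp
    | add x y hx hy => rw [add_tmul]; simp only [map_add, add_mul, hx, hy, smul_add]
    | tmul x x' =>
      rw [wedgeMap_mul_incl _ _ y.2, map_smul, smul_smul, ← pow_add,
        Even.neg_one_pow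
          (by simpa only [mul_add, mul_one, add_comm] using Nat.even_mul_succ_self k),
        one_smul]
      simp only [pairMul, LinearMap.comp_apply, LinearEquiv.coe_coe, tensorTensorTensorComm_tmul,
        map_tmul, congr_tmul]
      exact (bidegProj_eq_tmul _ _ (by rw [coe_ecast, coe_mf (hmf _ _)])
        (by rw [coe_ecast, coe_mf (hmf _ _)])).symm

theorem schurRel_eq_relSpan {a b : ℕ} (hb : 1 ≤ b) :
    schurRel K n mf Df a b = relSpan K n a b 1 := by
  rw [schurRel, dif_pos hb]
  apply le_antisymm
  · rintro _ ⟨t, rfl⟩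
    induction t with
    | zero => simp
    | add x y hx hy => rw [map_add]; exact add_mem hx hy
    | tmul u w =>
      rw [theta1_tmul hmf hDf]
      exact bidegProj_mem_relSpan (by omega) u.2 w.2
  · refine Submodule.span_le.mpr ?_
    rintro _ ⟨u, hu, q, hq, w, hw, rfl⟩
    obtain rfl : q = b - 1 := by omega
    exact ⟨⟨u, hu⟩ ⊗ₜ ⟨w, hw⟩, theta1_tmul hmf hDf hb _ _⟩

end Formulas

section Comparison

variable {K : Type} [Field K] {n : ℕ}
variable {mf : ∀ p q : ℕ, Lam K n p ⊗[K] Lam K n q →ₗ[K] Lam K n (p+q)}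
  {Df : ∀ p q : ℕ, Lam K n (p+q) →ₗ[K] Lam K n p ⊗[K] Lam K n q}
  (hmf : ∀ p q, IsMulMap K n p q (mf p q)) (hDf : ∀ p q, IsComulMap K n p q (Df p q))

include hDf in
theorem bidegProj_diag_mul_incl₂ {a b : ℕ} {x : ExteriorAlgebra K (V K n)}
    (hx : x ∈ ⋀[K]^a (V K n)) (w : ExteriorAlgebra K (V K n)) :
    bidegProj K (V K n) a b (diag K _ x * incl₂ K _ w) =
      bidegProj K (V K n) a b (incl₁ K _ x * incl₂ K _ w) := by
  have h := bidegProj_diag_mul hDf (b := b) (by omega : a + 0 = a) (⟨x, hx⟩ : Lam K n (a + 0))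
    one_mem_exteriorPower w
  have hs := split_apply Df (LinearMap.inl K (V K n) (V K n)) (LinearMap.inr K (V K n) (V K n))
    (by omega : a = a + 0) ⟨x, hx⟩
  rw [split_zero hDf] at hs
  simp only [map_one, mul_one] at h
  rw [h]
  exact congrArg (fun z => bidegProj K (V K n) a b (z * incl₂ K _ w)) hs.symm

variable [CharZero K]

include hDf in
theorem bidegProj_split_diag {a b i l q : ℕ} (hla : l ≤ a) (u : Lam K n (a + i))
    {w₁ w₂ : ExteriorAlgebra K (V K n)}
    (hw₁ : w₁ ∈ ⋀[K]^l (V K n)) (hw₂ : w₂ ∈ ⋀[K]^q (V K n)) :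
    bidegProj K (V K n) a b (wedgeMap (LinearMap.inl K (V K n) (V K n) +
        LinearMap.inr K (V K n) (V K n)) (LinearMap.inl K (V K n) (V K n)) a i (Df a i u) *
          incl₁ K _ w₁ * incl₂ K _ w₂) =
      ((a - l).choose i : K) •
        bidegProj K (V K n) a b (diag K _ u * incl₁ K _ w₁ * incl₂ K _ w₂) := by
  have key := eq_choose_smul_of_forall (K := K)
    (fun j => bidegProj K (V K n) a b (split Df (LinearMap.inl K (V K n) (V K n) +
      LinearMap.inr K (V K n) (V K n)) (LinearMap.inl K (V K n) (V K n)) (a + i) j u *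
        incl₁ K _ w₁ * incl₂ K _ w₂))
    (bidegProj K (V K n) a b (diag K _ u * incl₁ K _ w₁ * incl₂ K _ w₂)) l (a - l) (a + i + 1)
    (fun c => by
      have h := bidegProj_scaled_mul a b l q (1 + c) 1 (u : ExteriorAlgebra K (V K n)) hw₁ hw₂
      simp only [mul_one, one_pow] at h
      rw [Nat.add_sub_cancel' hla, ← h, one_smul, add_smul, one_smul,
        add_right_comm (LinearMap.inl K (V K n) (V K n)),
        map_add_smul_eq_sum_split hDf, Finset.sum_mul, Finset.sum_mul, map_sum]
      simp only [smul_mul_assoc, map_smul])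
    (i := i) (by omega)
  rw [split_apply Df _ _ rfl] at key
  exact key

include hmf hDf

theorem range_gammaMap_le {a b k : ℕ} (hka : k ≤ a) (hkb : k ≤ b) :
    LinearMap.range (gammaMap K n mf Df a b k hka hkb) ≤ relSpan K n a b 1 := by
  rintro _ ⟨t, rfl⟩
  induction t with
  | zero => simp
  | add x y hx hy => rw [map_add]; exact add_mem hx hy
  | tmul x t =>
    induction t with
    | zero => simp
    | add y z hy hz => rw [tmul_add, map_add]; exact add_mem hy hz
    | tmul y z =>
      have h := bidegProj_sub_mem_relSpan hDf (by omega : 0 + k + (b - k) = b) x.2 y.2 z.2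
      rw [mul_assoc (diag K _ _) (incl₂ K _ _), ← map_mul (incl₂ K _),
        bidegProj_diag_mul_incl₂ hDf x.2,
        map_mul (incl₂ K _), ← mul_assoc] at h
      rw [gammaMap_tmul hmf hDf]
      convert neg_mem (Submodule.smul_mem _ ((-1 : K) ^ k) h) using 1
      rw [smul_sub, smul_smul, ← mul_pow]
      simp

omit [CharZero K] in
theorem sub_wedgeMap_mem_range_gammaMap {a b k i : ℕ} (hka : k ≤ a) (hkb : k ≤ b) (hik : i ≤ k)
    (t : Lam K n a ⊗[K] Lam K n i) {w₁ w₂ : ExteriorAlgebra K (V K n)}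
    (hw₁ : w₁ ∈ ⋀[K]^(k - i) (V K n)) (hw₂ : w₂ ∈ ⋀[K]^(b - k) (V K n)) :
    bidegProj K (V K n) a b (wedgeMap (LinearMap.inl K (V K n) (V K n))
        (LinearMap.inr K (V K n) (V K n)) a i t * incl₂ K _ w₁ * incl₂ K _ w₂) -
      (-1 : K) ^ k • bidegProj K (V K n) a b (wedgeMap (LinearMap.inl K (V K n) (V K n) +
        LinearMap.inr K (V K n) (V K n)) (LinearMap.inl K (V K n) (V K n)) a i t *
          incl₁ K _ w₁ * incl₂ K _ w₂) ∈
      LinearMap.range (gammaMap K n mf Df a b k hka hkb) := by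
  induction t with
  | zero => simp
  | add x y hx hy =>
    convert add_mem hx hy using 1
    simp only [map_add, add_mul, smul_add]
    abel
  | tmul x y =>
    have hyw : (y : ExteriorAlgebra K (V K n)) * w₁ ∈ ⋀[K]^k (V K n) := by
      have := mul_mem_exteriorPower y.2 hw₁
      rwa [Nat.add_sub_cancel' hik] at this
    refine ⟨x ⊗ₜ (⟨_, hyw⟩ ⊗ₜ ⟨w₂, hw₂⟩), ?_⟩
    rw [gammaMap_tmul hmf hDf]
    simp only [wedgeMap_tmul, map_mul, mul_assoc]

theorem relSpan_le_range_gammaMap {a b k i : ℕ} (hka : k ≤ a) (hkb : k ≤ b) (hik : i ≤ k)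
    (hi : Odd i ∨ 0 < i ∧ k < a)
    (hsucc : i < k → relSpan K n a b (i + 1) ≤
      LinearMap.range (gammaMap K n mf Df a b k hka hkb)) :
    relSpan K n a b i ≤ LinearMap.range (gammaMap K n mf Df a b k hka hkb) := by
  refine Submodule.span_le.mpr ?_
  rintro _ ⟨u, hu, q, hq, w, hw, rfl⟩
  rw [SetLike.mem_coe]
  have hw' : w ∈ (⋀[K]^(k - i) (V K n)) * (⋀[K]^(b - k) (V K n)) := by
    rw [← pow_add, (by omega : k - i + (b - k) = q)]
    exact hw
  clear hw
  induction hw' using Submodule.mul_induction_on' with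
  | add x _ y _ hx hy => rw [map_add, mul_add, map_add]; exact add_mem hx hy
  | mem_mul_mem w₁ hw₁ w₂ hw₂ =>
    have h₁ := sub_wedgeMap_mem_range_gammaMap hmf hDf hka hkb hik (Df a i ⟨u, hu⟩) hw₁ hw₂
    rw [bidegProj_split_diag hDf (by omega) _ hw₁ hw₂] at h₁
    have h₂ := bidegProj_diag_mul hDf (b := b) (by omega : a + 0 = a) (⟨u, hu⟩ : Lam K n (a + i))
      one_mem_exteriorPower (w₁ * w₂)
    simp only [map_one, mul_one] at h₂
    rw [mul_assoc, ← map_mul (incl₂ K _), ← h₂] at h₁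
    have h₃ : bidegProj K (V K n) a b (diag K _ u * incl₁ K _ w₁ * incl₂ K _ w₂) -
        (-1 : K) ^ (k - i) • bidegProj K (V K n) a b (diag K _ u * incl₂ K _ (w₁ * w₂)) ∈
          LinearMap.range (gammaMap K n mf Df a b k hka hkb) := by
      rw [map_mul (incl₂ K _), ← mul_assoc]
      rcases hik.lt_or_eq with h | rfl
      · exact hsucc h (bidegProj_sub_mem_relSpan hDf (by omega) hu hw₁ hw₂)
      · rw [Nat.sub_self] at hw₁
        obtain ⟨r, rfl⟩ := Submodule.mem_one.mp (by simpa using hw₁)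
        simp
    have h₄ := add_mem h₁ (Submodule.smul_mem _ ((-1 : K) ^ k * ((a - (k - i)).choose i : K)) h₃)
    have hne : (1 : K) - (-1) ^ i * ((a - (k - i)).choose i : K) ≠ 0 := by
      rcases hi with hi | ⟨hi, hka'⟩
      · rw [hi.neg_one_pow, neg_one_mul, sub_neg_eq_add]
        exact_mod_cast (by omega : 1 + (a - (k - i)).choose i ≠ 0)
      · have hlt : 1 < (a - (k - i)).choose i := by
          refine lt_of_lt_of_le ?_ (Nat.choose_le_choose i (by omega : i + 1 ≤ a - (k - i)))
          simpa using hi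
        rcases neg_one_pow_eq_or K i with h | h
        · rw [h, one_mul, sub_ne_zero]
          exact_mod_cast hlt.ne
        · rw [h, neg_one_mul, sub_neg_eq_add]
          exact_mod_cast (by omega : 1 + (a - (k - i)).choose i ≠ 0)
    rw [← Submodule.smul_mem_iff _ hne]
    convert h₄ using 1
    have hsign : (-1 : K) ^ k * (-1) ^ (k - i) = (-1) ^ i := by
      obtain ⟨j, rfl⟩ := Nat.exists_eq_add_of_le hik
      rw [Nat.add_sub_cancel_left, pow_add, mul_assoc, ← mul_pow]
      simp
    rw [smul_sub, smul_smul, smul_smul, mul_right_comm, hsign, sub_smul, one_smul]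
    abel

end Comparison

section Inclusion

variable {K : Type} [Field K] [CharZero K] {n : ℕ}
variable {mf : ∀ p q : ℕ, Lam K n p ⊗[K] Lam K n q →ₗ[K] Lam K n (p+q)}
  {Df : ∀ p q : ℕ, Lam K n (p+q) →ₗ[K] Lam K n p ⊗[K] Lam K n q}
  (hmf : ∀ p q, IsMulMap K n p q (mf p q)) (hDf : ∀ p q, IsComulMap K n p q (Df p q))
include hmf hDf

theorem range_gammaMap_eq {a b k : ℕ} (hka : k ≤ a) (hkb : k ≤ b) (hk : 1 ≤ k)
    (h : k < a ∨ k = 1) :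
    LinearMap.range (gammaMap K n mf Df a b k hka hkb) = relSpan K n a b 1 := by
  refine le_antisymm (range_gammaMap_le hmf hDf hka hkb) ?_
  have key : ∀ d i, 1 ≤ i → i + d = k →
      relSpan K n a b i ≤ LinearMap.range (gammaMap K n mf Df a b k hka hkb) := by
    intro d
    induction d with
    | zero =>
      intro i hi hid
      refine relSpan_le_range_gammaMap hmf hDf hka hkb (by omega) ?_ (by omega)
      rcases h with h | h
      · exact Or.inr ⟨hi, h⟩
      · obtain rfl : i = 1 := by omega
        exact Or.inl odd_one
    | succ d ih =>
      intro i hi hid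
      exact relSpan_le_range_gammaMap hmf hDf hka hkb (by omega) (Or.inr ⟨hi, by omega⟩)
        fun _ => ih (i + 1) (by omega) (by omega)
  exact key (k - 1) 1 le_rfl (by omega)

end Inclusion

section Minors

variable {K : Type} [Field K] {n : ℕ}

variable (K) in
/-- The minor of the coordinates listed by `e`, as a linear form on the exterior algebra. -/
def minor {a : ℕ} (e : Fin a → Fin n) : ExteriorAlgebra K (V K n) →ₗ[K] K :=
  exteriorPower.alternatingMapLinearEquiv (Matrix.detRowAlternating (n := Fin a) (R := K)) ∘ₗ
    degProj K (Fin a → K) a ∘ₗ (ExteriorAlgebra.map (LinearMap.funLeft K K e)).toLinearMap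

theorem minor_ιMulti {a : ℕ} {e : Fin a → Fin n} (he : Function.Injective e) :
    minor K e (ExteriorAlgebra.ιMulti K a fun i => Pi.single (e i) 1) = 1 := by
  have h := degProj_coe a (exteriorPower.ιMulti K a fun i =>
    LinearMap.funLeft K K e (Pi.single (e i) (1 : K)))
  rw [exteriorPower.ιMulti_apply_coe] at h
  simp only [minor, LinearMap.comp_apply, AlgHom.toLinearMap_apply,
    ExteriorAlgebra.map_apply_ιMulti]
  change exteriorPower.alternatingMapLinearEquiv _ (degProj K (Fin a → K) a
    (ExteriorAlgebra.ιMulti K a fun i => LinearMap.funLeft K K e (Pi.single (e i) (1 : K)))) = 1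
  rw [h, exteriorPower.alternatingMapLinearEquiv_apply_ιMulti]
  change Matrix.det (Matrix.of fun i => LinearMap.funLeft K K e (Pi.single (e i) (1 : K))) = 1
  rw [← Matrix.det_one (n := Fin a)]
  congr 1
  ext i j
  simp [LinearMap.funLeft_apply, Matrix.one_apply, Pi.single_apply, he.eq_iff, eq_comm]

theorem minor_mul_ι_mul {a : ℕ} {e : Fin a → Fin n} {j : Fin n} (hj : ∀ i, e i ≠ j)
    (x y : ExteriorAlgebra K (V K n)) :
    minor K e (x * ExteriorAlgebra.ι K (Pi.single j 1) * y) = 0 := by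
  have h : LinearMap.funLeft K K e (Pi.single j 1) = 0 := by
    ext i
    simp [LinearMap.funLeft_apply, hj i]
  simp [minor, h]

variable (K) in
/-- The symmetrized product of two minors. -/
def minorSymm {a : ℕ} (e₁ e₂ : Fin a → Fin n) : Lam K n a ⊗[K] Lam K n a →ₗ[K] K :=
  TensorProduct.lift ((LinearMap.mul K K).compl₁₂ (minor K e₁ ∘ₗ Submodule.subtype _)
      (minor K e₂ ∘ₗ Submodule.subtype _)) +
    TensorProduct.lift ((LinearMap.mul K K).compl₁₂ (minor K e₂ ∘ₗ Submodule.subtype _)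
      (minor K e₁ ∘ₗ Submodule.subtype _))

theorem minorSymm_tmul {a : ℕ} (e₁ e₂ : Fin a → Fin n) (x y : Lam K n a) :
    minorSymm K e₁ e₂ (x ⊗ₜ y) = minor K e₁ x * minor K e₂ y + minor K e₂ x * minor K e₁ y := rfl

variable {mf : ∀ p q : ℕ, Lam K n p ⊗[K] Lam K n q →ₗ[K] Lam K n (p+q)}
  {Df : ∀ p q : ℕ, Lam K n (p+q) →ₗ[K] Lam K n p ⊗[K] Lam K n q}
  (hmf : ∀ p q, IsMulMap K n p q (mf p q)) (hDf : ∀ p q, IsComulMap K n p q (Df p q))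
include hDf

theorem bidegProj_diag_mul_incl₁ {a : ℕ} (x y : Lam K n a) :
    bidegProj K (V K n) a a (diag K _ x * incl₁ K _ y) = (-1 : K) ^ a • (y ⊗ₜ x) := by
  have hsign : (-1 : K) ^ (a * a) = (-1) ^ a := by
    rcases Nat.even_or_odd a with h | h
    · rw [h.neg_one_pow, (h.mul_left a).neg_one_pow]
    · rw [h.neg_one_pow, (h.mul h).neg_one_pow]
  rw [diag, add_comm, map_add_eq_sum_split hDf, Finset.sum_mul, map_sum, Finset.sum_eq_single 0]
  · rw [split_zero hDf, mul_comm_of_mem (map_mem_exteriorPower _ x.2)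
      (map_mem_exteriorPower _ y.2), map_smul, bidegProj_coe, hsign]
  · intro j hj hj0
    rw [Finset.mem_range] at hj
    rw [split_apply Df _ _ (by omega : a = (a - j) + j)]
    generalize Df _ _ _ = t
    induction t with
    | zero => simp
    | add x y hx hy => rw [map_add, add_mul, map_add, hx, hy, add_zero]
    | tmul x x' =>
      have hxy := mul_mem_exteriorPower x'.2 y.2
      rw [wedgeMap_tmul, mul_assoc, ← map_mul, mul_comm_of_mem (map_mem_exteriorPower _ x.2)
        (map_mem_exteriorPower _ hxy), map_smul,
        bidegProj_incl_of_ne hxy x.2 (Or.inl (by omega)), smul_zero]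
  · intro h; exact absurd (Finset.mem_range.mpr (by omega)) h

include hmf

theorem minorSymm_gammaMap {a : ℕ} (e₁ e₂ : Fin a → Fin n)
    (t : Lam K n a ⊗[K] (Lam K n a ⊗[K] Lam K n (a - a))) :
    minorSymm K e₁ e₂ (gammaMap K n mf Df a a a le_rfl le_rfl t) = 0 := by
  induction t with
  | zero => simp
  | add x y hx hy => rw [map_add, map_add, hx, hy, add_zero]
  | tmul x t =>
    induction t with
    | zero => simp
    | add y z hy hz => rw [tmul_add, map_add, map_add, hy, hz, add_zero]
    | tmul y z =>
      obtain ⟨z, hz⟩ := z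
      rw [gammaMap_tmul hmf hDf]
      have hz' := hz
      rw [Nat.sub_self] at hz'
      obtain ⟨r, rfl⟩ := Submodule.mem_one.mp (by simpa using hz')
      simp only [AlgHom.commutes, ← Algebra.commutes r, ← Algebra.smul_def, map_smul]
      rw [bidegProj_coe, bidegProj_diag_mul_incl₁ hDf, smul_comm r, smul_smul, ← mul_pow]
      simp only [mul_neg, mul_one, neg_neg, one_pow, one_smul, map_sub, map_smul, minorSymm_tmul]
      ring

theorem not_relSpan_le_range_gammaMap {a : ℕ} (ha : 2 ≤ a) (hn : a + a ≤ n) :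
    ¬ relSpan K n a a 1 ≤ LinearMap.range (gammaMap K n mf Df a a a le_rfl le_rfl) := by
  intro hle
  obtain ⟨m, rfl⟩ := Nat.exists_eq_add_of_le' ha
  let j₁ : Fin n := ⟨m + 2, by omega⟩
  let j₂ : Fin n := ⟨m + 3, by omega⟩
  let e₁ : Fin (m + 2) → Fin n := fun i => ⟨i, by omega⟩
  let e : Fin m → Fin n := fun i => ⟨i + 2, by omega⟩
  let e₂ : Fin (m + 2) → Fin n := Fin.cons j₁ (Fin.cons j₂ e)
  have he₁ : Function.Injective e₁ := fun i i' h => by simpa [e₁, Fin.ext_iff] using h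
  have he₂ : Function.Injective e₂ := by
    rw [Fin.cons_injective_iff, Fin.cons_injective_iff]
    refine ⟨?_, ?_, fun i i' h => by simpa [e, Fin.ext_iff] using h⟩
    · rintro ⟨i, hi⟩
      induction i using Fin.cases with
      | zero => simp [j₁, j₂] at hi
      | succ i => have := congrArg Fin.val hi; simp [e, j₁] at this; omega
    · rintro ⟨i, hi⟩
      have := congrArg Fin.val hi; simp [e, j₂] at this; omega
  have h₁ : ∀ i, e₁ i ≠ j₁ := fun i h => by
    have := congrArg Fin.val h; simp [e₁, j₁] at this; omega
  have h₂ : ∀ i, e₁ i ≠ j₂ := fun i h => by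
    have := congrArg Fin.val h; simp [e₁, j₂] at this; omega
  let b : Fin n → V K n := fun i => Pi.single i 1
  let s : ExteriorAlgebra K (V K n) := ExteriorAlgebra.ιMulti K (m + 2) (b ∘ e₁)
  let w' : ExteriorAlgebra K (V K n) := ExteriorAlgebra.ιMulti K m (b ∘ e)
  let w : ExteriorAlgebra K (V K n) := ExteriorAlgebra.ι K (b j₂) * w'
  have hs : s ∈ ⋀[K]^(m + 2) (V K n) := ExteriorAlgebra.ιMulti_range K _ ⟨_, rfl⟩
  have hw : w ∈ ⋀[K]^(1 + m) (V K n) :=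
    mul_mem_exteriorPower (ι_mem_exteriorPower _) (ExteriorAlgebra.ιMulti_range K _ ⟨_, rfl⟩)
  have hw₂ : ExteriorAlgebra.ι K (b j₁) * w = ExteriorAlgebra.ιMulti K (m + 2) (b ∘ e₂) := by
    rw [ExteriorAlgebra.ιMulti_succ_apply, ExteriorAlgebra.ιMulti_succ_apply]
    rfl
  have hu : s * ExteriorAlgebra.ι K (b j₁) ∈ ⋀[K]^(m + 2 + 1) (V K n) :=
    mul_mem_exteriorPower hs (ι_mem_exteriorPower _)
  obtain ⟨t, ht⟩ := hle (bidegProj_mem_relSpan (by omega : 1 + (1 + m) = m + 2) hu hw)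
  have h0 := minorSymm_gammaMap hmf hDf e₁ e₂ t
  have hd : diag K (V K n) (ExteriorAlgebra.ι K (b j₁)) =
      incl₁ K (V K n) (ExteriorAlgebra.ι K (b j₁)) +
        incl₂ K (V K n) (ExteriorAlgebra.ι K (b j₁)) := by
    simp only [ExteriorAlgebra.map_apply_ι, LinearMap.add_apply, map_add]
  rw [ht, map_mul (diag K _), hd, mul_add, add_mul, mul_assoc _ (incl₂ K _ _), ← map_mul (incl₂ K _),
    hw₂,
    map_add, map_add, bidegProj_diag_mul_incl₂ hDf hs] at h0
  have hfirst : minorSymm K e₁ e₂ (bidegProj K (V K n) (m + 2) (m + 2)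
      (diag K _ s * incl₁ K _ (ExteriorAlgebra.ι K (b j₁)) * incl₂ K _ w)) = 0 := by
    have h := bidegProj_diag_mul hDf (b := m + 2) (by omega : m + 1 + 1 = m + 2)
      (⟨s, hs⟩ : Lam K n (m + 1 + 1)) (ι_mem_exteriorPower (b j₁)) w
    rw [h]
    generalize Df _ _ _ = t
    induction t with
    | zero => simp
    | add x y hx hy => rw [map_add, add_mul, add_mul, map_add, map_add, hx, hy, add_zero]
    | tmul x y =>
      have hx := mul_mem_exteriorPower x.2 (ι_mem_exteriorPower (K := K) (b j₁))
      have hy := mul_mem_exteriorPower y.2 hw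
      have hy' : (y : ExteriorAlgebra K (V K n)) * w ∈ ⋀[K]^(m + 2) (V K n) := by
        rwa [(by omega : 1 + (1 + m) = m + 2)] at hy
      rw [wedgeMap_mul_incl _ _ (ι_mem_exteriorPower _), map_smul, map_smul,
        bidegProj_eq_tmul (⟨_, hx⟩ : Lam K n (m + 2)) ⟨_, hy'⟩ rfl rfl, minorSymm_tmul]
      have hα₁ := minor_mul_ι_mul h₁ (x : ExteriorAlgebra K (V K n)) 1
      have hα₂ := minor_mul_ι_mul h₂ (y : ExteriorAlgebra K (V K n)) w'
      rw [mul_one] at hα₁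
      rw [mul_assoc] at hα₂
      change _ • (minor K e₁ ((x : ExteriorAlgebra K (V K n)) * ExteriorAlgebra.ι K (b j₁)) * _ +
        _ * minor K e₁ ((y : ExteriorAlgebra K (V K n)) *
          (ExteriorAlgebra.ι K (b j₂) * w'))) = 0
      rw [hα₁, hα₂]
      simp
  have hα := minor_mul_ι_mul h₁ (1 : ExteriorAlgebra K (V K n)) w
  rw [one_mul] at hα
  change minor K e₁ (ExteriorAlgebra.ι K (b j₁) * w) = 0 at hα
  rw [hw₂] at hα
  rw [hfirst, zero_add, bidegProj_eq_tmul ⟨s, hs⟩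
    ⟨_, ExteriorAlgebra.ιMulti_range K _ ⟨b ∘ e₂, rfl⟩⟩ rfl rfl, minorSymm_tmul] at h0
  simp only [hα, mul_zero, add_zero] at h0
  have hβ₁ := minor_ιMulti (K := K) he₁
  have hβ₂ := minor_ιMulti (K := K) he₂
  change minor K e₁ s = 1 at hβ₁
  change minor K e₂ (ExteriorAlgebra.ιMulti K (m + 2) (b ∘ e₂)) = 1 at hβ₂
  rw [hβ₁, hβ₂] at h0
  simp at h0

end Minors

section Equivariance

theorem prodMap_comp_inl {R E W : Type} [Semiring R] [AddCommMonoid E] [Module R E]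
    [AddCommMonoid W] [Module R W] (f : E →ₗ[R] W) :
    LinearMap.prodMap f f ∘ₗ LinearMap.inl R E E = LinearMap.inl R W W ∘ₗ f := by
  ext <;> simp

theorem prodMap_comp_inr {R E W : Type} [Semiring R] [AddCommMonoid E] [Module R E]
    [AddCommMonoid W] [Module R W] (f : E →ₗ[R] W) :
    LinearMap.prodMap f f ∘ₗ LinearMap.inr R E E = LinearMap.inr R W W ∘ₗ f := by
  ext <;> simp

variable {K : Type} [Field K] {n : ℕ}
variable {rho : ∀ p : ℕ, GLn K n → (Lam K n p →ₗ[K] Lam K n p)} (hrho : IsExtAction K n rho)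
include hrho

theorem coe_rho (p : ℕ) (g : GLn K n) (x : Lam K n p) :
    (rho p g x : ExteriorAlgebra K (V K n)) = ExteriorAlgebra.map
      (Matrix.toLin' (g : Matrix (Fin n) (Fin n) K)) (x : ExteriorAlgebra K (V K n)) := by
  have h : Submodule.subtype _ ∘ₗ rho p g =
      (ExteriorAlgebra.map (Matrix.toLin' (g : Matrix (Fin n) (Fin n) K))).toLinearMap ∘ₗ
        Submodule.subtype (⋀[K]^p (V K n)) :=
    lam_hom_ext fun v => by
      simp only [LinearMap.comp_apply, hrho p g v]
      exact (ExteriorAlgebra.map_apply_ιMulti _ _).symm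
  exact LinearMap.congr_fun h x

theorem rhoT_bidegProj (a b : ℕ) (g : GLn K n) (r : ExteriorAlgebra K (V K n × V K n)) :
    rhoT K n rho a b g (bidegProj K (V K n) a b r) =
      bidegProj K (V K n) a b (ExteriorAlgebra.map
        (LinearMap.prodMap (Matrix.toLin' (g : Matrix (Fin n) (Fin n) K))
          (Matrix.toLin' (g : Matrix (Fin n) (Fin n) K))) r) := by
  induction r using prod_induction with
  | zero => simp
  | add x y hx hy => simp only [map_add, hx, hy]
  | smul c x hx => simp only [map_smul, hx]
  | mul p q x y =>
    rw [map_mul (ExteriorAlgebra.map _), map_map_apply, map_map_apply, prodMap_comp_inl,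
      prodMap_comp_inr, ← map_map_apply, ← map_map_apply, ← coe_rho hrho, ← coe_rho hrho]
    by_cases h : p = a ∧ q = b
    · obtain ⟨rfl, rfl⟩ := h
      rw [bidegProj_coe, bidegProj_coe, rhoT, map_tmul]
    · have h' : p ≠ a ∨ q ≠ b := by tauto
      rw [bidegProj_incl_of_ne x.2 y.2 h', bidegProj_incl_of_ne (rho p g x).2 (rho q g y).2 h',
        map_zero]

theorem rhoT_mem_relSpan {a b i : ℕ} (g : GLn K n) {z : Lam K n a ⊗[K] Lam K n b}
    (hz : z ∈ relSpan K n a b i) : rhoT K n rho a b g z ∈ relSpan K n a b i := by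
  revert z
  change relSpan K n a b i ≤ (relSpan K n a b i).comap (rhoT K n rho a b g)
  refine Submodule.span_le.mpr ?_
  rintro _ ⟨u, hu, q, hq, w, hw, rfl⟩
  rw [SetLike.mem_coe, Submodule.mem_comap, rhoT_bidegProj hrho, map_mul (ExteriorAlgebra.map _),
    map_map_apply, map_map_apply, prodMap_comp_inr, LinearMap.comp_add,
    prodMap_comp_inl, prodMap_comp_inr, ← LinearMap.add_comp, ← map_map_apply,
    ← map_map_apply]
  exact bidegProj_mem_relSpan hq (map_mem_exteriorPower _ hu) (map_mem_exteriorPower _ hw)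

end Equivariance

theorem isQuotIso_refl {K : Type} [Field K] {G' M : Type} [AddCommGroup M] [Module K M]
    {N : Submodule K M} {ρ : G' → M →ₗ[K] M} (h : ∀ g, ∀ z ∈ N, ρ g z ∈ N) :
    IsQuotIso K N N ρ ρ := by
  refine ⟨LinearEquiv.refl K _, fun g x y hxy => ?_⟩
  rw [LinearEquiv.refl_apply, Submodule.Quotient.eq] at hxy ⊢
  rw [← map_sub]
  exact h g _ hxy

theorem IsQuotIso.eq_of_le {K : Type} [Field K] {G' M : Type} [AddCommGroup M] [Module K M]
    [FiniteDimensional K M] {N₁ N₂ : Submodule K M} {ρ₁ ρ₂ : G' → M →ₗ[K] M}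
    (h : IsQuotIso K N₁ N₂ ρ₁ ρ₂) (hle : N₁ ≤ N₂) : N₁ = N₂ := by
  obtain ⟨e, -⟩ := h
  have h₁ := N₁.finrank_quotient_add_finrank
  have h₂ := N₂.finrank_quotient_add_finrank
  rw [e.finrank_eq] at h₁
  exact Submodule.eq_of_le_of_finrank_eq hle (by omega)

theorem exists_dInt_ne_zero {a b k i : ℕ} (hba : b ≤ a) (hk1 : 1 ≤ k) (hkb : k ≤ b)
    (h : k < a ∨ k = 1) (hi : 1 ≤ i) (hib : i ≤ b) :
    ∃ t : ℕ, i - min (b-k) i ≤ t ∧ t ≤ min k i ∧ dInt a b k i t ≠ 0 := by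
  rcases Nat.lt_trichotomy (i - min (b - k) i) 1 with hp | hp | hp
  · refine ⟨1, by omega, by omega, ?_⟩
    rw [dInt, (by omega : i - min (b - k) i = 0), Finset.sum_Icc_succ_top zero_le_one,
      Finset.Icc_self,
      Finset.sum_singleton, Nat.choose_symm_add]
    simp
    omega
  · refine ⟨1, by omega, by omega, ?_⟩
    rw [dInt, hp, Finset.Icc_self, Finset.sum_singleton, Nat.choose_symm_add]
    simp
    omega
  · refine ⟨i - min (b - k) i, le_rfl, by omega, ?_⟩
    rw [dInt, Finset.Icc_self, Finset.sum_singleton, Nat.choose_symm_add]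
    generalize hpt : i - min (b - k) i = t at hp
    have hlt : 1 < (a - k + t).choose t :=
      lt_of_lt_of_le (by simpa using hp.trans' one_pos)
        (Nat.choose_le_choose t (by omega : t + 1 ≤ a - k + t))
    rw [Nat.sub_self, Nat.choose_zero_right, Nat.cast_one, mul_one]
    rcases neg_one_pow_eq_or ℤ t with h | h <;> rw [h] <;> omega

theorem dInt_eq_zero (a : ℕ) : dInt a a a 2 2 = 0 := by
  simp [dInt]

/-- Lemma 5.3 of the paper: for `a ≥ b ≥ k ≥ 1` and `n ≥ a+b`,
`coker(γ_k) ≅ L_{(a,b)}` as `G`-modules iff for every `1 ≤ i ≤ b` there is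
`p ≤ t ≤ q` (where `p = i − min(b−k,i)` and `q = min(k,i)`) with `d_k(a,b,t) ≠ 0`. -/
theorem statement10 (K : Type) [Field K] [CharZero K] (n : ℕ)
    (a b k : ℕ) (hba : b ≤ a) (hk1 : 1 ≤ k) (hkb : k ≤ b) (hn : a + b ≤ n)
    (mf : ∀ p q : ℕ, Lam K n p ⊗[K] Lam K n q →ₗ[K] Lam K n (p+q))
    (Df : ∀ p q : ℕ, Lam K n (p+q) →ₗ[K] Lam K n p ⊗[K] Lam K n q)
    (hmf : ∀ p q, IsMulMap K n p q (mf p q))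
    (hDf : ∀ p q, IsComulMap K n p q (Df p q))
    (rho : ∀ p : ℕ, GLn K n → (Lam K n p →ₗ[K] Lam K n p))
    (hrho : IsExtAction K n rho) :
    IsQuotIso K
        (LinearMap.range (gammaMap K n mf Df a b k (hkb.trans hba) hkb))
        (schurRel K n mf Df a b)
        (rhoT K n rho a b) (rhoT K n rho a b) ↔
      ∀ i : ℕ, 1 ≤ i → i ≤ b →
        ∃ t : ℕ, i - min (b-k) i ≤ t ∧ t ≤ min k i ∧ dInt a b k i t ≠ 0 := by
  have hb1 : 1 ≤ b := hk1.trans hkb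
  rw [schurRel_eq_relSpan hmf hDf hb1]
  by_cases h : k < a ∨ k = 1
  · rw [range_gammaMap_eq hmf hDf (hkb.trans hba) hkb hk1 h]
    exact iff_of_true (isQuotIso_refl fun g z hz => rhoT_mem_relSpan hrho g hz)
      fun i hi hib => exists_dInt_ne_zero hba hk1 hkb h hi hib
  · obtain rfl : k = a := by omega
    obtain rfl : k = b := by omega
    have hk2 : 2 ≤ k := by omega
    refine iff_of_false (fun hiso => ?_) fun hd => ?_
    · exact not_relSpan_le_range_gammaMap hmf hDf hk2 hn
        (hiso.eq_of_le (range_gammaMap_le hmf hDf le_rfl le_rfl)).ge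
    · obtain ⟨t, ht₁, ht₂, ht⟩ := hd 2 one_le_two hk2
      obtain rfl : t = 2 := by omega
      exact ht (dInt_eq_zero k)

end MMS
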